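/- arXiv:1504.07099 — 9 statements merged into one kernel-verified Lean document; each statement's English description precedes it below -/
import Mathlib

section
/- For every prime p ≠ 3, there exists a point (x,y,z) ∈ 𝔽_p³ with x² + y² + z² = xyz, (x,y,z) ≠ (0,0,0), such that f³(x,y,z) = (x,y,z) and f(x,y,z) ≠ (x,y,z); i.e., (x,y,z) is a periodic point of f of exact period 3. (This is the existence part of Theorem A: the dynamical system (M, φ₁φ₂) with forbidden set {(0,0,0)} is strongly residually periodic with bound 3.) -/
/-- The automorphism `f = φ₁ ∘ φ₂` of the Markoff surface,
`f(x,y,z) = ((z²−1)x − zy, zx − y, z)`. -/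
def markoffMap {R : Type*} [CommRing R] (P : R × R × R) : R × R × R :=
  ((P.2.2 ^ 2 - 1) * P.1 - P.2.2 * P.2.1, P.2.2 * P.1 - P.2.1, P.2.2)

/-!
On the plane `z = 1` the map is the linear map `(x, y) ↦ (-y, x - y)`, which has order three, and
its fixed points satisfy `x = -y` and `3y = 0`. The Markoff surface meets this plane in the conic
`x² - xy + y² = -1`, where these two equations would give `-1 = 3y² = 0`. It remains to find a
point on the conic: putting `x = a + b`, `y = 2b` turns its equation into `a² + 3b² = -1`, which is
solvable over every finite field in which `3 ≠ 0`.
-/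

section CommRing

variable {R : Type*} [CommRing R]

theorem markoffMap_one (x y : R) : markoffMap (x, y, 1) = (-y, x - y, 1) := by
  simp [markoffMap]

theorem markoffMap_iterate_three_one (x y : R) : markoffMap^[3] (x, y, 1) = (x, y, 1) := by
  simp only [Function.iterate_succ_apply, Function.iterate_zero_apply, markoffMap_one,
    Prod.mk.injEq]
  exact ⟨by ring, by ring, trivial⟩

theorem markoffMap_one_ne_self [Nontrivial R] {x y : R} (h : x ^ 2 + y ^ 2 + 1 = x * y) :
    markoffMap (x, y, 1) ≠ (x, y, 1) := by
  rw [markoffMap_one]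
  intro hfix
  simp only [Prod.mk.injEq, and_true] at hfix
  obtain ⟨hx, hy⟩ := hfix
  have three_mul_y : 3 * y = 0 := by linear_combination -hx - hy
  subst hx
  exact one_ne_zero (α := R) (by linear_combination h - y * three_mul_y)

end CommRing

section FiniteField

variable {F : Type*} [Field F] [Finite F]

theorem exists_mul_sq_add_mul_sq_eq {a b : F} (ha : a ≠ 0) (hb : b ≠ 0) (c : F) :
    ∃ x y : F, a * x ^ 2 + b * y ^ 2 = c := by
  have := Fintype.ofFinite F
  by_cases hF : ringChar F = 2
  · obtain ⟨x, hx⟩ := FiniteField.isSquare_of_char_two hF (c / a)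
    exact ⟨x, 0, by simp [sq x, ← hx, mul_div_cancel₀ c ha]⟩
  · obtain ⟨x, y, hxy⟩ := FiniteField.exists_root_sum_quadratic
      (Polynomial.degree_quadratic (b := 0) (c := -c) ha)
      (Polynomial.degree_quadratic (b := 0) (c := 0) hb)
      (FiniteField.odd_card_of_char_ne_two hF)
    simp only [map_zero, zero_mul, add_zero, Polynomial.eval_add, Polynomial.eval_mul,
      Polynomial.eval_C, Polynomial.eval_pow, Polynomial.eval_X] at hxy
    exact ⟨x, y, by linear_combination hxy⟩

theorem exists_sq_add_sq_add_one_eq_mul (h3 : (3 : F) ≠ 0) :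
    ∃ x y : F, x ^ 2 + y ^ 2 + 1 = x * y := by
  obtain ⟨a, b, hab⟩ := exists_mul_sq_add_mul_sq_eq one_ne_zero h3 (-1)
  exact ⟨a + b, 2 * b, by linear_combination hab⟩

theorem stmt_0_general (h3 : (3 : F) ≠ 0) :
    ∃ x y z : F,
      x ^ 2 + y ^ 2 + z ^ 2 = x * y * z ∧
      (x, y, z) ≠ (0, 0, 0) ∧
      markoffMap^[3] (x, y, z) = (x, y, z) ∧
      markoffMap (x, y, z) ≠ (x, y, z) := by
  obtain ⟨x, y, hxy⟩ := exists_sq_add_sq_add_one_eq_mul h3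
  exact ⟨x, y, 1, by simpa using hxy, by simp, markoffMap_iterate_three_one x y,
    markoffMap_one_ne_self hxy⟩

end FiniteField

theorem stmt_0 (p : ℕ) (hp : p.Prime) (hp3 : p ≠ 3) :
    ∃ x y z : ZMod p,
      x ^ 2 + y ^ 2 + z ^ 2 = x * y * z ∧
      (x, y, z) ≠ (0, 0, 0) ∧
      markoffMap^[3] (x, y, z) = (x, y, z) ∧
      markoffMap (x, y, z) ≠ (x, y, z) := by
  have : Fact p.Prime := ⟨hp⟩
  have : Fact (Nat.Prime 3) := ⟨Nat.prime_three⟩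
  exact stmt_0_general (by exact_mod_cast ZMod.prime_ne_zero p 3 hp3)
end

section
/- For every natural number N there exists a prime p > N such that for every (x,y,z) ∈ 𝔽_p³ with x² + y² + z² = xyz, (x,y,z) ≠ (0,0,0) and z² ≠ 1, and for every integer n with 1 ≤ n ≤ N, one has fⁿ(x,y,z) ≠ (x,y,z). (This is Theorem B: the dynamical system (M, φ₁φ₂) with forbidden set {z² = 1} ∪ {(0,0,0)} is not strongly residually periodic over ℚ.) -/
/-!
On the fibre over `z`, the map `f` is the square of the linear map with matrix `(z, -1; 1, 0)`,
whose eigenvalues are the roots `t`, `t⁻¹` of `T² - zT + 1`. A point of period `n` with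
`(x, y) ≠ 0` therefore forces `t ^ (2n) = 1`, while Frobenius permutes the two roots, so that
`t ^ (q - 1) = 1` or `t ^ (q + 1) = 1` over the field with `q` elements. By Dirichlet's theorem
there are large primes `q` such that `(q - 1) / 6` and `(q + 1) / 4` are integers without small
prime factors; for these, `t ^ 6 = 1` or `t ^ 4 = 1`, which leaves only `z² = 1`, `z = 0` and
`z² = 4`. The first is excluded, and the other two carry no nonzero point of the surface because
`-1` is not a square modulo `q`.
-/

open Function

section Ring

variable {R S : Type*} [CommRing R] [CommRing S]

theorem semiconj_prodMap_markoffMap (g : R →+* S) :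
    Semiconj (Prod.map g (Prod.map g g)) markoffMap markoffMap := by
  intro P
  simp [markoffMap]

/-- The linear form `t x - y`. When `t` is a root of `T² - zT + 1`, it is an eigenvector, with
eigenvalue `t²`, for the action of `markoffMap` on linear forms on the fibre over `z`. -/
def markoffEigenform (t : R) (P : R × R × R) : R :=
  t * P.1 - P.2.1

theorem markoffEigenform_markoffMap {t : R} {P : R × R × R} (ht : t ^ 2 + 1 = P.2.2 * t) :
    markoffEigenform t (markoffMap P) = t ^ 2 * markoffEigenform t P := by
  simp only [markoffEigenform, markoffMap]
  linear_combination (P.2.1 - (P.2.2 + t) * P.1) * ht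

theorem markoffEigenform_iterate_markoffMap {t : R} {P : R × R × R}
    (ht : t ^ 2 + 1 = P.2.2 * t) (n : ℕ) :
    markoffEigenform t (markoffMap^[n] P) = t ^ (2 * n) * markoffEigenform t P := by
  induction n generalizing P with
  | zero => simp
  | succ n ih =>
    have ht' : t ^ 2 + 1 = (markoffMap P).2.2 * t := ht
    rw [iterate_succ_apply, ih ht', markoffEigenform_markoffMap ht, mul_add, pow_add, mul_assoc,
      mul_one]

theorem pow_two_mul_eq_one_or_markoffEigenform_eq_zero [IsDomain R] {t : R} {P : R × R × R} {n : ℕ}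
    (ht : t ^ 2 + 1 = P.2.2 * t) (hP : IsPeriodicPt markoffMap n P) :
    t ^ (2 * n) = 1 ∨ markoffEigenform t P = 0 := by
  have hmul := markoffEigenform_iterate_markoffMap ht n
  rw [hP.eq] at hmul
  exact mul_left_eq_self₀.mp hmul.symm

end Ring

section QuadraticRoot

variable {R : Type*} [CommRing R] {t z : R}

theorem ne_zero_of_sq_add_one_eq_mul [Nontrivial R] (ht : t ^ 2 + 1 = z * t) : t ≠ 0 := by
  rintro rfl
  simp at ht

theorem sq_eq_four_of_sq_eq_one (ht : t ^ 2 + 1 = z * t) (h : t ^ 2 = 1) : z ^ 2 = 4 := by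
  linear_combination (-z ^ 2 + t ^ 2 + 3) * h - (t ^ 2 + 1 + z * t) * ht

theorem sq_eq_four_or_eq_zero_of_pow_four_eq_one [IsDomain R] (ht : t ^ 2 + 1 = z * t)
    (h : t ^ 4 = 1) : z ^ 2 = 4 ∨ z = 0 := by
  have hprod : (t ^ 2 - 1) * (z * t) = 0 := by linear_combination h - (t ^ 2 - 1) * ht
  refine (mul_eq_zero.mp hprod).imp (fun h₁ ↦ ?_) fun h₂ ↦ ?_
  · exact sq_eq_four_of_sq_eq_one ht (sub_eq_zero.mp h₁)
  · exact (mul_eq_zero.mp h₂).resolve_right (ne_zero_of_sq_add_one_eq_mul ht)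

theorem sq_eq_four_or_sq_eq_one_of_pow_six_eq_one [IsDomain R] (ht : t ^ 2 + 1 = z * t)
    (h : t ^ 6 = 1) : z ^ 2 = 4 ∨ z ^ 2 = 1 := by
  have hprod : (t ^ 2 - 1) * ((z ^ 2 - 1) * t ^ 2) = 0 := by
    linear_combination h - (t ^ 2 - 1) * (t ^ 2 + 1 + z * t) * ht
  refine (mul_eq_zero.mp hprod).imp (fun h₁ ↦ ?_) fun h₂ ↦ ?_
  · exact sq_eq_four_of_sq_eq_one ht (sub_eq_zero.mp h₁)
  · have ht0 := pow_ne_zero 2 (ne_zero_of_sq_add_one_eq_mul ht)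
    exact sub_eq_zero.mp ((mul_eq_zero.mp h₂).resolve_right ht0)

end QuadraticRoot

section Eigenvalue

variable {K : Type*} [Field K] {t z : K}

theorem inv_sq_add_one_eq_mul_inv (ht : t ^ 2 + 1 = z * t) : t⁻¹ ^ 2 + 1 = z * t⁻¹ := by
  have ht0 := ne_zero_of_sq_add_one_eq_mul ht
  field_simp
  linear_combination ht

theorem eq_or_eq_inv_of_sq_add_one_eq_mul {s : K} (ht : t ^ 2 + 1 = z * t)
    (hs : s ^ 2 + 1 = z * s) : s = t ∨ s = t⁻¹ := by
  have hprod : (s - t) * (s * t - 1) = 0 := by linear_combination t * hs - s * ht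
  exact (mul_eq_zero.mp hprod).imp sub_eq_zero.mp
    fun h ↦ eq_inv_of_mul_eq_one_left (sub_eq_zero.mp h)

open Polynomial in
theorem exists_sq_add_one_eq_mul [IsAlgClosed K] (z : K) : ∃ t : K, t ^ 2 + 1 = z * t := by
  have hdeg : (X ^ 2 - C z * X + 1 : K[X]).degree = 2 := by compute_degree!
  obtain ⟨t, ht⟩ := IsAlgClosed.exists_root _ (by rw [hdeg]; exact two_ne_zero)
  have heval : t ^ 2 - z * t + 1 = 0 := by simpa using ht
  exact ⟨t, by linear_combination heval⟩

theorem pow_two_mul_eq_one_of_isPeriodicPt {P : K × K × K} {n : ℕ} (ht : t ^ 2 + 1 = P.2.2 * t)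
    (hP : IsPeriodicPt markoffMap n P) (hxy : P.1 ≠ 0 ∨ P.2.1 ≠ 0) : t ^ (2 * n) = 1 := by
  have ht0 := ne_zero_of_sq_add_one_eq_mul ht
  rcases pow_two_mul_eq_one_or_markoffEigenform_eq_zero ht hP with h | hform
  · exact h
  rcases pow_two_mul_eq_one_or_markoffEigenform_eq_zero (inv_sq_add_one_eq_mul_inv ht) hP
    with h | hform_inv
  · rwa [inv_pow, inv_eq_one] at h
  unfold markoffEigenform at hform hform_inv
  have hx : P.1 ≠ 0 := by
    intro hx
    refine hxy.elim (absurd hx) (absurd ?_)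
    linear_combination t * hx - hform
  have htt : t = t⁻¹ := mul_right_cancel₀ hx (by linear_combination hform - hform_inv)
  have hsq : t ^ 2 = 1 := by rw [sq]; nth_rw 2 [htt]; exact mul_inv_cancel₀ ht0
  rw [pow_mul, hsq, one_pow]

theorem pow_card_sub_one_eq_one_or_pow_card_add_one_eq_one {F : Type*} [Field F] [Fintype F]
    [Algebra F K] {z : F} (ht : t ^ 2 + 1 = algebraMap F K z * t) :
    t ^ (Fintype.card F - 1) = 1 ∨ t ^ (Fintype.card F + 1) = 1 := by
  have ht0 := ne_zero_of_sq_add_one_eq_mul ht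
  have hfrob : (t ^ Fintype.card F) ^ 2 + 1 = algebraMap F K z * t ^ Fintype.card F := by
    simpa only [map_add, map_mul, map_pow, map_one, AlgHom.commutes,
      FiniteField.coe_frobeniusAlgHom] using congrArg (FiniteField.frobeniusAlgHom F K) ht
  refine (eq_or_eq_inv_of_sq_add_one_eq_mul ht hfrob).imp (fun h ↦ ?_) fun h ↦ ?_
  · exact mul_right_cancel₀ ht0 (by rw [pow_sub_one_mul Fintype.card_ne_zero, h, one_mul])
  · rw [pow_succ, h, inv_mul_cancel₀ ht0]

end Eigenvalue

theorem pow_eq_one_of_pow_mul_eq_one_of_coprime {M : Type*} [Monoid M] {t : M} {a b m : ℕ}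
    (hb : b.Coprime m) (hab : t ^ (a * b) = 1) (hm : t ^ m = 1) : t ^ a = 1 := by
  rw [pow_mul] at hab
  have ham : (t ^ a) ^ m = 1 := by rw [pow_right_comm, hm, one_pow]
  rw [← pow_one (t ^ a), ← hb.gcd_eq_one]
  exact pow_gcd_eq_one.mpr ⟨hab, ham⟩

section MarkoffSurface

variable {F : Type*} [Field F] {x y z : F}

theorem eq_zero_of_sq_add_sq_eq_zero (hF : ¬IsSquare (-1 : F)) (h : x ^ 2 + y ^ 2 = 0) :
    y = 0 := by
  by_contra hy
  refine hF ⟨x / y, ?_⟩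
  field_simp
  linear_combination -h

theorem markoff_third_ne_zero (hF : ¬IsSquare (-1 : F)) (hM : x ^ 2 + y ^ 2 + z ^ 2 = x * y * z)
    (h0 : (x, y, z) ≠ (0, 0, 0)) : z ≠ 0 := by
  rintro rfl
  have hy : y = 0 := eq_zero_of_sq_add_sq_eq_zero (x := x) hF (by linear_combination hM)
  have hx : x = 0 := eq_zero_of_sq_add_sq_eq_zero (x := y) hF (by linear_combination hM)
  exact h0 (by rw [hx, hy])

theorem markoff_third_sq_ne_four (hF : ¬IsSquare (-1 : F))
    (hM : x ^ 2 + y ^ 2 + z ^ 2 = x * y * z) : z ^ 2 ≠ 4 := by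
  intro hz
  have h4 : (4 : F) = 0 := eq_zero_of_sq_add_sq_eq_zero (x := 2 * x - z * y) hF
    (by linear_combination 4 * hM + (y ^ 2 - 4) * hz)
  have h2 : (2 : F) = 0 := pow_eq_zero_iff two_ne_zero |>.mp (by linear_combination h4)
  exact hF ⟨1, by linear_combination -h2⟩

theorem not_isPeriodicPt_markoffMap [Fintype F] {k l n : ℕ}
    (hk : Fintype.card F = 6 * k + 1) (hl : Fintype.card F + 1 = 4 * l)
    (hkn : k.Coprime (2 * n)) (hln : l.Coprime (2 * n))
    (hM : x ^ 2 + y ^ 2 + z ^ 2 = x * y * z) (h0 : (x, y, z) ≠ (0, 0, 0)) (hz : z ^ 2 ≠ 1) :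
    ¬IsPeriodicPt markoffMap n (x, y, z) := by
  intro hP
  have hF : ¬IsSquare (-1 : F) := by rw [FiniteField.isSquare_neg_one_iff]; omega
  have hz0 := markoff_third_ne_zero hF hM h0
  have hz4 := markoff_third_sq_ne_four hF hM
  let g := algebraMap F (AlgebraicClosure F)
  obtain ⟨t, ht⟩ := exists_sq_add_one_eq_mul (g z)
  have hxy : g x ≠ 0 ∨ g y ≠ 0 := by
    by_contra! ⟨hx, hy⟩
    rw [map_eq_zero] at hx hy
    exact hz0 (by simpa [hx, hy] using hM)
  have hn : t ^ (2 * n) = 1 :=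
    pow_two_mul_eq_one_of_isPeriodicPt ht (hP.map (semiconj_prodMap_markoffMap g)) hxy
  have hz4K : g z ^ 2 ≠ 4 := by rw [← map_pow, ← map_ofNat g 4]; exact g.injective.ne hz4
  rcases pow_card_sub_one_eq_one_or_pow_card_add_one_eq_one ht with h | h
  · rw [hk, Nat.add_sub_cancel] at h
    have hz1K : g z ^ 2 ≠ 1 := by rw [← map_pow, ← map_one g]; exact g.injective.ne hz
    have ht6 : t ^ 6 = 1 := pow_eq_one_of_pow_mul_eq_one_of_coprime hkn h hn
    exact (sq_eq_four_or_sq_eq_one_of_pow_six_eq_one ht ht6).elim hz4K hz1K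
  · rw [hl] at h
    have hz0K : g z ≠ 0 := (map_ne_zero g).mpr hz0
    have ht4 : t ^ 4 = 1 := pow_eq_one_of_pow_mul_eq_one_of_coprime hln h hn
    exact (sq_eq_four_or_eq_zero_of_pow_four_eq_one ht ht4).elim hz4K hz0K

end MarkoffSurface

theorem exists_eq_two_pow_mul_three_pow_mul {M : ℕ} (hM : M ≠ 0) :
    ∃ a b m : ℕ, m.Coprime 2 ∧ m.Coprime 3 ∧ M = 2 ^ a * 3 ^ b * m := by
  obtain ⟨a, M', hM', rfl⟩ := Nat.exists_eq_pow_mul_and_not_dvd hM 2 (by decide)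
  obtain ⟨b, m, hm, rfl⟩ :=
    Nat.exists_eq_pow_mul_and_not_dvd (right_ne_zero_of_mul hM) 3 (by decide)
  refine ⟨a, b, m, ?_, ?_, by ring⟩
  · exact ((Nat.prime_two.coprime_iff_not_dvd).mpr fun h ↦ hM' (h.mul_left _)).symm
  · exact ((Nat.prime_three.coprime_iff_not_dvd).mpr hm).symm

theorem exists_prime_gt_eq_six_mul_add_one_and_add_one_eq_four_mul (N : ℕ) {M : ℕ} (hM : M ≠ 0) :
    ∃ p k l : ℕ, p.Prime ∧ N < p ∧ p = 6 * k + 1 ∧ p + 1 = 4 * l ∧ k.Coprime M ∧ l.Coprime M := by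
  obtain ⟨a, b, m, hm2, hm3, rfl⟩ := exists_eq_two_pow_mul_three_pow_mul hM
  have hm72 : Nat.Coprime 72 m := (hm2.pow_right 3).mul_right (hm3.pow_right 2) |>.symm
  -- `p ≡ 67` modulo `72` makes `(p - 1) / 6` and `(p + 1) / 4` prime to `6`, and `p ≡ 2` modulo `m`
  -- makes `p - 1` and `p + 1` prime to `m`.
  obtain ⟨r, hr72, hrm⟩ := Nat.chineseRemainder hm72 67 2
  have hr : r.Coprime (72 * m) :=
    .mul_right (hr72.gcd_eq.trans (by norm_num)) (hrm.gcd_eq.trans hm2.symm)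
  obtain ⟨p, hpN, hp, hpr⟩ := Nat.forall_exists_prime_gt_and_modEq N
    (mul_ne_zero (by norm_num) (right_ne_zero_of_mul hM)) hr
  have hp72 : p % 72 = 67 := (hpr.of_mul_right m).trans hr72
  have hpm : p ≡ 2 [MOD m] := (hpr.of_mul_left 72).trans hrm
  obtain ⟨k, hk⟩ : ∃ k, p = 6 * k + 1 := ⟨p / 6, by omega⟩
  obtain ⟨l, hl⟩ : ∃ l, p + 1 = 4 * l := ⟨(p + 1) / 4, by omega⟩
  have coprime_two_pow_mul_three_pow_mul {c : ℕ} (h2 : ¬2 ∣ c) (h3 : ¬3 ∣ c)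
      (hm : c.Coprime m) : c.Coprime (2 ^ a * 3 ^ b * m) :=
    .mul_right (.mul_right (.pow_right _ (Nat.prime_two.coprime_iff_not_dvd.mpr h2).symm)
      (.pow_right _ (Nat.prime_three.coprime_iff_not_dvd.mpr h3).symm)) hm
  have hkm : k.Coprime m := by
    have h : 6 * k ≡ 1 [MOD m] := Nat.ModEq.add_right_cancel' 1 (hk ▸ hpm)
    exact .coprime_mul_left (h.gcd_eq.trans (Nat.gcd_one_left m))
  have hlm : l.Coprime m := by
    have h : 4 * l ≡ 3 [MOD m] := hl ▸ hpm.add_right 1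
    exact .coprime_mul_left (h.gcd_eq.trans hm3.symm)
  exact ⟨p, k, l, hp, hpN, hk, hl, coprime_two_pow_mul_three_pow_mul (by omega) (by omega) hkm,
    coprime_two_pow_mul_three_pow_mul (by omega) (by omega) hlm⟩

theorem stmt_1 (N : ℕ) :
    ∃ p : ℕ, p.Prime ∧ p > N ∧
      ∀ x y z : ZMod p,
        x ^ 2 + y ^ 2 + z ^ 2 = x * y * z →
        (x, y, z) ≠ (0, 0, 0) →
        z ^ 2 ≠ 1 →
        ∀ n : ℕ, 1 ≤ n → n ≤ N → markoffMap^[n] (x, y, z) ≠ (x, y, z) := by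
  obtain ⟨p, k, l, hp, hpN, hk, hl, hkN, hlN⟩ :=
    exists_prime_gt_eq_six_mul_add_one_and_add_one_eq_four_mul N
      (mul_ne_zero two_ne_zero N.factorial_ne_zero)
  refine ⟨p, hp, hpN, fun x y z hM h0 hz n hn hnN ↦ ?_⟩
  have : Fact p.Prime := ⟨hp⟩
  have hdvd : 2 * n ∣ 2 * N.factorial := mul_dvd_mul_left 2 (Nat.dvd_factorial hn hnN)
  exact not_isPeriodicPt_markoffMap (by rwa [ZMod.card]) (by rwa [ZMod.card])
    (hkN.coprime_dvd_right hdvd) (hlN.coprime_dvd_right hdvd) hM h0 hz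
end

section
/- The only periodic point of f on the rational points of the Markoff surface is the origin: if (x,y,z) ∈ ℚ³ satisfies x² + y² + z² = xyz and fⁿ(x,y,z) = (x,y,z) for some integer n ≥ 1, then (x,y,z) = (0,0,0). -/
/-! For fixed `z` the map `f` is linear in `(x, y)` with determinant `1` and trace `z² - 2`, so by
Cayley–Hamilton the first coordinates along an orbit satisfy `uₖ₊₂ = (z² - 2) uₖ₊₁ - uₖ`.
If `|z| > 2` then the trace exceeds `2`, and comparing both sides where `|u|` is maximal shows that
a periodic solution vanishes; hence `x = 0`. If `|z| ≤ 2`, the form `x² - zxy + y²` is positive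
semidefinite while it equals `-z²` on the surface; hence `z = 0`. Either way `xyz = 0`, so the
equation of the surface says that a sum of three squares vanishes. -/

section Orbit

variable {R : Type*} [CommRing R]

theorem markoffMap_iterate_snd_snd (P : R × R × R) (k : ℕ) :
    (markoffMap^[k] P).2.2 = P.2.2 := by
  induction k with
  | zero => rfl
  | succ k ih => rwa [Function.iterate_succ_apply']

theorem markoffMap_markoffMap_fst (P : R × R × R) :
    (markoffMap (markoffMap P)).1 = (P.2.2 ^ 2 - 2) * (markoffMap P).1 - P.1 := by
  simp only [markoffMap]
  ring

theorem markoffMap_iterate_add_two_fst (P : R × R × R) (k : ℕ) :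
    (markoffMap^[k + 2] P).1 =
      (P.2.2 ^ 2 - 2) * (markoffMap^[k + 1] P).1 - (markoffMap^[k] P).1 := by
  simp only [Function.iterate_succ_apply', markoffMap_markoffMap_fst,
    markoffMap_iterate_snd_snd]

end Orbit

theorem exists_forall_le_of_periodic {α : Type*} [LinearOrder α] {u : ℕ → α} {n : ℕ}
    (hn : 0 < n) (hu : Function.Periodic u n) : ∃ m, ∀ k, u k ≤ u m := by
  obtain ⟨m, -, hm⟩ :=
    (Finset.range n).exists_max_image u (Finset.nonempty_range_iff.mpr hn.ne')
  refine ⟨m, fun k => ?_⟩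
  rw [← hu.map_mod_nat k]
  exact hm _ (Finset.mem_range.mpr (Nat.mod_lt k hn))

section Ordered

variable {R : Type*} [CommRing R] [LinearOrder R] [IsStrictOrderedRing R]

theorem eq_zero_of_periodic_of_linear_recurrence {t : R} (ht : 2 < |t|) {u : ℕ → R}
    (hrec : ∀ k, u (k + 2) = t * u (k + 1) - u k) {n : ℕ} (hn : 0 < n)
    (hu : Function.Periodic u n) (k : ℕ) : u k = 0 := by
  obtain ⟨m, hmax⟩ := exists_forall_le_of_periodic hn (hu.comp abs)
  simp only [Function.comp_apply] at hmax
  -- Move the maximum one period forward, so that it has a predecessor.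
  obtain ⟨j, hj⟩ : ∃ j, m + n = j + 1 := ⟨m + n - 1, by omega⟩
  have hum : u (j + 1) = u m := by rw [← hj, hu]
  have hbound : |t| * |u m| ≤ 2 * |u m| :=
    calc |t| * |u m| = |u (j + 2) + u j| := by rw [hrec, hum, sub_add_cancel, abs_mul]
      _ ≤ |u (j + 2)| + |u j| := abs_add_le _ _
      _ ≤ |u m| + |u m| := add_le_add (hmax _) (hmax _)
      _ = 2 * |u m| := (two_mul _).symm
  have hum_nonpos : |u m| ≤ 0 :=
    not_lt.mp fun hpos => (mul_lt_mul_of_pos_right ht hpos).not_ge hbound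
  exact abs_nonpos_iff.mp ((hmax k).trans hum_nonpos)

theorem fst_eq_zero_of_isPeriodicPt_markoffMap {P : R × R × R} (hz : 2 < |P.2.2|) {n : ℕ}
    (hn : 0 < n) (hP : Function.IsPeriodicPt markoffMap n P) : P.1 = 0 := by
  have htrace : 2 < |P.2.2 ^ 2 - 2| := by
    refine lt_of_lt_of_le ?_ (le_abs_self _)
    rw [← sq_abs]
    nlinarith
  have hperiodic : Function.Periodic (fun k => (markoffMap^[k] P).1) n := fun k => by
    simp only [Function.iterate_add_apply, hP.eq]
  exact eq_zero_of_periodic_of_linear_recurrence htrace (markoffMap_iterate_add_two_fst P) hn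
    hperiodic 0

theorem eq_zero_of_markoff_of_abs_le_two {x y z : R}
    (hM : x ^ 2 + y ^ 2 + z ^ 2 = x * y * z) (hz : |z| ≤ 2) : z = 0 := by
  have hdisc : 0 ≤ 4 - z ^ 2 := by
    rw [← sq_abs]
    nlinarith [abs_nonneg z]
  have hsquares : (2 * x - z * y) ^ 2 + (4 - z ^ 2) * y ^ 2 + 4 * z ^ 2 = 0 := by
    linear_combination 4 * hM
  have hz_sq : z ^ 2 ≤ 0 := by
    linarith [hsquares, sq_nonneg (2 * x - z * y), mul_nonneg hdisc (sq_nonneg y)]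
  exact (sq_nonpos_iff z).mp hz_sq

theorem eq_zero_of_markoff_of_mul_eq_zero {x y z : R}
    (hM : x ^ 2 + y ^ 2 + z ^ 2 = x * y * z) (h : x * y * z = 0) :
    x = 0 ∧ y = 0 ∧ z = 0 := by
  rw [h] at hM
  refine ⟨?_, ?_, ?_⟩ <;> refine (sq_nonpos_iff _).mp ?_ <;>
    linarith [sq_nonneg x, sq_nonneg y, sq_nonneg z]

theorem stmt_2_general (x y z : R) (hM : x ^ 2 + y ^ 2 + z ^ 2 = x * y * z)
    (hper : ∃ n : ℕ, 1 ≤ n ∧ markoffMap^[n] (x, y, z) = (x, y, z)) :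
    (x, y, z) = ((0 : R), (0 : R), (0 : R)) := by
  obtain ⟨n, hn, hP⟩ := hper
  have hxyz : x * y * z = 0 := by
    rcases le_or_gt |z| 2 with hz | hz
    · rw [eq_zero_of_markoff_of_abs_le_two hM hz, mul_zero]
    · have hx : x = 0 := fst_eq_zero_of_isPeriodicPt_markoffMap (P := (x, y, z)) hz hn hP
      rw [hx, zero_mul, zero_mul]
  obtain ⟨rfl, rfl, rfl⟩ := eq_zero_of_markoff_of_mul_eq_zero hM hxyz
  rfl

end Ordered

theorem stmt_2 (x y z : ℚ)
    (hM : x ^ 2 + y ^ 2 + z ^ 2 = x * y * z)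
    (hper : ∃ n : ℕ, 1 ≤ n ∧ markoffMap^[n] (x, y, z) = (x, y, z)) :
    (x, y, z) = ((0 : ℚ), (0 : ℚ), (0 : ℚ)) :=
  stmt_2_general x y z hM hper
end

section
/- For every prime p with p ≡ 3 (mod 4), if (x,y,z) ∈ 𝔽_p³ satisfies x² + y² + z² = xyz and f(f(x,y,z)) = (x,y,z), then (x,y,z) = (0,0,0); i.e., modulo such primes the Markoff surface has no point of period 2 (or less) under f other than the origin. Together with the absence of nontrivial fixed points, this shows the bound 3 in Theorem A is sharp. -/
/-!
On the slice `z = 0` the map `f` is `(x, y) ↦ (-x, -y)`, an involution, and the surface is the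
conic `x² + y² = 0`, whose only point is the origin when `-1` is not a square. On a slice `z ≠ 0`
every point of period dividing `2` is already fixed. The fixed points are given by `zx = 2y` and
`zy = 2x`; then `xyz = 2x² = 2y²`, and twice the Markoff equation reads `2z² = 0`.
-/

section CommRing

variable {R : Type*} [CommRing R] {x y z : R}

theorem markoffMap_eq_self_iff :
    markoffMap (x, y, z) = (x, y, z) ↔ z * x = 2 * y ∧ z * y = 2 * x := by
  simp only [markoffMap, Prod.mk.injEq, and_true]
  constructor
  · rintro ⟨hx, hy⟩
    exact ⟨by linear_combination hy, by linear_combination hx - z * hy⟩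
  · rintro ⟨hzx, hzy⟩
    exact ⟨by linear_combination z * hzx + hzy, by linear_combination hzx⟩

variable [NoZeroDivisors R]

theorem markoffMap_markoffMap_eq_self_iff :
    markoffMap (markoffMap (x, y, z)) = (x, y, z) ↔
      z = 0 ∨ markoffMap (x, y, z) = (x, y, z) := by
  constructor
  · intro hper
    refine or_iff_not_imp_left.mpr fun hz ↦ ?_
    simp only [markoffMap, Prod.mk.injEq, and_true] at hper ⊢
    obtain ⟨hx, hy⟩ := hper
    have fst_fixed : (z ^ 2 - 1) * x - z * y = x :=
      mul_left_cancel₀ hz (by linear_combination hy)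
    have snd_fixed : z * x - y = y :=
      mul_left_cancel₀ hz (by linear_combination z ^ 2 * fst_fixed - hx)
    exact ⟨fst_fixed, snd_fixed⟩
  · rintro (rfl | hfix)
    · simp [markoffMap]
    · rw [hfix, hfix]

theorem eq_zero_of_markoff_of_markoffMap_eq_self (h2 : (2 : R) ≠ 0)
    (hM : x ^ 2 + y ^ 2 + z ^ 2 = x * y * z) (hfix : markoffMap (x, y, z) = (x, y, z)) :
    (x, y, z) = (0, 0, 0) := by
  obtain ⟨hzx, hzy⟩ := markoffMap_eq_self_iff.mp hfix
  have two_mul_z_sq : 2 * z ^ 2 = 0 := by linear_combination 2 * hM + y * hzx + x * hzy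
  obtain rfl : z = 0 := by simpa [h2] using two_mul_z_sq
  obtain rfl : y = 0 := by simpa [h2] using hzx
  obtain rfl : x = 0 := by simpa [h2] using hzy
  rfl

end CommRing

section Field

variable {K : Type*} [Field K]

theorem sq_add_sq_eq_zero_iff_of_not_isSquare_neg_one (hK : ¬IsSquare (-1 : K)) {a b : K} :
    a ^ 2 + b ^ 2 = 0 ↔ a = 0 ∧ b = 0 := by
  refine ⟨fun h ↦ ?_, by rintro ⟨rfl, rfl⟩; simp⟩
  have hb : b = 0 := by
    by_contra hb
    refine hK ⟨a / b, ?_⟩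
    field_simp
    linear_combination -h
  subst hb
  exact ⟨by simpa using h, rfl⟩

theorem stmt_4_general (hK : ¬IsSquare (-1 : K)) {x y z : K}
    (hM : x ^ 2 + y ^ 2 + z ^ 2 = x * y * z)
    (hper : markoffMap (markoffMap (x, y, z)) = (x, y, z)) :
    (x, y, z) = (0, 0, 0) := by
  have anisotropic {a b : K} := sq_add_sq_eq_zero_iff_of_not_isSquare_neg_one hK (a := a) (b := b)
  rcases markoffMap_markoffMap_eq_self_iff.mp hper with rfl | hfix
  · obtain ⟨rfl, rfl⟩ := anisotropic.mp (by linear_combination hM : x ^ 2 + y ^ 2 = 0)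
    rfl
  · have h2 : (2 : K) ≠ 0 := fun h ↦
      one_ne_zero (anisotropic.mp (by linear_combination h : (1 : K) ^ 2 + 1 ^ 2 = 0)).1
    exact eq_zero_of_markoff_of_markoffMap_eq_self h2 hM hfix

end Field

theorem stmt_4 (p : ℕ) (hp : p.Prime) (hp4 : p % 4 = 3)
    (x y z : ZMod p)
    (hM : x ^ 2 + y ^ 2 + z ^ 2 = x * y * z)
    (hper : markoffMap (markoffMap (x, y, z)) = (x, y, z)) :
    (x, y, z) = ((0 : ZMod p), (0 : ZMod p), (0 : ZMod p)) := by
  have : Fact p.Prime := ⟨hp⟩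
  exact stmt_4_general (fun hsq ↦ ZMod.exists_sq_eq_neg_one_iff.mp hsq hp4) hM hper
end

section
/- (Lemma 1.) Let p be an odd prime and let (x,y,z) ∈ 𝔽_p³ satisfy x² + y² + z² = xyz with (x,y,z) ≠ (0,0,0). If (x,y,z) is a periodic point of f of exact period n and gcd(n, p) = 1, then n divides p² − 1. -/
/-!
The map preserves `z` and acts on the plane of height `z` through an element of `SL₂`. Over a field
with `q` elements this group has order `q (q² - 1)`, so by Lagrange every period divides
`q (q² - 1)`; a period prime to `q` then divides `q² - 1`.
-/

open Function Matrix
open scoped MatrixGroups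

theorem minimalPeriod_eq_of_forall_lt {α : Type*} {f : α → α} {a : α} {n : ℕ} (hn : 0 < n)
    (hper : IsPeriodicPt f n a) (hmin : ∀ m, 0 < m → m < n → ¬IsPeriodicPt f m a) :
    minimalPeriod f a = n :=
  (hper.minimalPeriod_le hn).antisymm <| not_lt.mp fun hlt ↦
    hmin _ (hper.minimalPeriod_pos hn) hlt (isPeriodicPt_minimalPeriod f a)

theorem isPeriodicPt_smul_natCard {G α : Type*} [Group G] [MulAction G α] (g : G) (a : α) :
    IsPeriodicPt (g • ·) (Nat.card G) a := by
  simp only [IsPeriodicPt, IsFixedPt, smul_iterate, pow_card_eq_one', one_smul]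

section CardSpecialLinearGroup

variable (n R : Type*) [Fintype n] [DecidableEq n] [CommRing R]

theorem ker_det_eq_range_toGL :
    (GeneralLinearGroup.det : GL n R →* Rˣ).ker =
      (SpecialLinearGroup.toGL : SpecialLinearGroup n R →* GL n R).range :=
  SetLike.coe_injective SpecialLinearGroup.range_toGL.symm

theorem natCard_specialLinearGroup_mul_natCard_units [Nonempty n] :
    Nat.card (SpecialLinearGroup n R) * Nat.card Rˣ = Nat.card (GL n R) := by
  have hcard_ker : Nat.card (SpecialLinearGroup n R) =
      Nat.card (GeneralLinearGroup.det : GL n R →* Rˣ).ker := by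
    rw [ker_det_eq_range_toGL]
    exact Nat.card_congr (MonoidHom.ofInjective SpecialLinearGroup.toGL_injective).toEquiv
  have hindex : (GeneralLinearGroup.det : GL n R →* Rˣ).ker.index = Nat.card Rˣ := by
    rw [Subgroup.index_ker, MonoidHom.range_eq_top.mpr GeneralLinearGroup.det_surjective,
      Subgroup.card_top]
  rw [hcard_ker, ← hindex, Subgroup.card_mul_index]

theorem natCard_specialLinearGroup_fin_two (K : Type*) [Field K] [Finite K] :
    Nat.card SL(2, K) = Nat.card K * (Nat.card K ^ 2 - 1) := by
  have := Fintype.ofFinite K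
  have hpos : 0 < Nat.card K - 1 := Nat.sub_pos_of_lt Finite.one_lt_card
  refine Nat.eq_of_mul_eq_mul_right hpos ?_
  calc Nat.card SL(2, K) * (Nat.card K - 1)
      = Nat.card (GL (Fin 2) K) := by
        rw [← Nat.card_units, natCard_specialLinearGroup_mul_natCard_units]
    _ = (Nat.card K ^ 2 - 1) * (Nat.card K ^ 2 - Nat.card K) := by
        simp [card_GL_field, Fin.prod_univ_two]
    _ = Nat.card K * (Nat.card K ^ 2 - 1) * (Nat.card K - 1) := by
        rw [sq, ← Nat.mul_sub_one, ← sq]; ring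

end CardSpecialLinearGroup

section MarkoffMap

variable {R : Type*} [CommRing R]

/-- The matrix in `SL₂` by which `markoffMap` acts on column vectors `(x, y)` in the plane of
height `z`. -/
def markoffMatrix (z : R) : SL(2, R) :=
  ⟨!![z ^ 2 - 1, -z; z, -1], by rw [det_fin_two_of]; ring⟩

theorem semiconj_markoffMatrix_smul_markoffMap (z : R) :
    Semiconj (fun v : Fin 2 → R ↦ (v 0, v 1, z)) (markoffMatrix z • ·) markoffMap := by
  intro v
  simp only [Matrix.SpecialLinearGroup.smul_def, smul_eq_mulVec, mulVec_fin_two]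
  simp [markoffMatrix, markoffMap, sub_eq_add_neg]

theorem isPeriodicPt_markoffMap_natCard_specialLinearGroup (P : R × R × R) :
    IsPeriodicPt markoffMap (Nat.card SL(2, R)) P :=
  (isPeriodicPt_smul_natCard (markoffMatrix P.2.2) ![P.1, P.2.1]).map
    (semiconj_markoffMatrix_smul_markoffMap P.2.2)

end MarkoffMap

theorem stmt_10_general {K : Type*} [Field K] [Finite K] {P : K × K × K} {n : ℕ}
    (hn : minimalPeriod markoffMap P = n) (hcop : n.Coprime (Nat.card K)) :
    n ∣ Nat.card K ^ 2 - 1 := by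
  have hdvd : n ∣ Nat.card K * (Nat.card K ^ 2 - 1) := by
    rw [← hn, ← natCard_specialLinearGroup_fin_two]
    exact (isPeriodicPt_markoffMap_natCard_specialLinearGroup P).minimalPeriod_dvd
  exact hcop.dvd_of_dvd_mul_left hdvd

theorem stmt_10 (p : ℕ) (hp : p.Prime) (hodd : Odd p)
    (x y z : ZMod p)
    (hM : x ^ 2 + y ^ 2 + z ^ 2 = x * y * z)
    (hne : (x, y, z) ≠ (0, 0, 0))
    (n : ℕ) (hn : 1 ≤ n)
    (hper : markoffMap^[n] (x, y, z) = (x, y, z))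
    (hmin : ∀ m : ℕ, 1 ≤ m → m < n → markoffMap^[m] (x, y, z) ≠ (x, y, z))
    (hgcd : Nat.gcd n p = 1) :
    n ∣ p ^ 2 - 1 := by
  have : Fact p.Prime := ⟨hp⟩
  simpa only [Nat.card_zmod] using
    stmt_10_general (minimalPeriod_eq_of_forall_lt hn hper hmin) (by rwa [Nat.card_zmod])
end

section
/- (Lemma 3.) For every natural number k there exists a prime p with p > k and p ≡ 19 (mod 24) such that no prime q ≤ k divides (p² − 1)/24; equivalently, there is an increasing sequence of primes p_k ≡ 19 (mod 24) with ω(p_k) → ∞, where ω(p) is the smallest prime factor of (p² − 1)/24. -/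
/-!
By Dirichlet's theorem there is a prime `p > k` with `p ≡ 43 [MOD 72]` and `p ≡ 2 [MOD q]` for
every prime `5 ≤ q ≤ k`. The first congruence refines `p ≡ 19 [MOD 24]` so as to force
`(p ^ 2 - 1) / 24 ≡ 5 [MOD 6]`, which excludes the prime factors `2` and `3`; the second gives
`p ^ 2 - 1 ≡ 3 [MOD q]`, which excludes `q`.
-/

theorem exists_prime_gt_and_modEq_and_modEq (k : ℕ) {m n a b : ℕ} (hm : m ≠ 0) (hn : n ≠ 0)
    (hmn : m.Coprime n) (ha : a.Coprime m) (hb : b.Coprime n) :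
    ∃ p, p.Prime ∧ k < p ∧ p ≡ a [MOD m] ∧ p ≡ b [MOD n] := by
  obtain ⟨c, hca, hcb⟩ := Nat.chineseRemainder hmn a b
  have hcm : c.Coprime m := hca.gcd_eq.trans ha
  have hcn : c.Coprime n := hcb.gcd_eq.trans hb
  obtain ⟨p, hkp, hp, hpc⟩ :=
    Nat.forall_exists_prime_gt_and_modEq k (mul_ne_zero hm hn) (hcm.mul_right hcn)
  exact ⟨p, hp, hkp, (hpc.of_mul_right n).trans hca, (hpc.of_mul_left m).trans hcb⟩

theorem exists_prime_gt_and_modEq_and_forall_prime_le_modEq (k b : ℕ) {m a : ℕ} (hm : m ≠ 0)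
    (ha : a.Coprime m) :
    ∃ p, p.Prime ∧ k < p ∧ p ≡ a [MOD m] ∧
      ∀ q, q.Prime → q ≤ k → ¬ q ∣ m * b → p ≡ b [MOD q] := by
  let S : Finset ℕ := {q ∈ Finset.Iic k | q.Prime ∧ ¬ q ∣ m * b}
  have mem_S {q : ℕ} : q ∈ S ↔ q ≤ k ∧ q.Prime ∧ ¬ q ∣ m * b := by
    simp only [S, Finset.mem_filter, Finset.mem_Iic]
  have hS_ne : ∏ q ∈ S, q ≠ 0 :=
    Finset.prod_ne_zero_iff.mpr fun q hq ↦ (mem_S.mp hq).2.1.ne_zero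
  have hS_coprime : (m * b).Coprime (∏ q ∈ S, q) :=
    Nat.Coprime.prod_right fun q hq ↦
      have ⟨_, hq_prime, hq_not_dvd⟩ := mem_S.mp hq
      (hq_prime.coprime_iff_not_dvd.mpr hq_not_dvd).symm
  obtain ⟨p, hp, hkp, hpa, hpb⟩ := exists_prime_gt_and_modEq_and_modEq k hm hS_ne
    hS_coprime.coprime_mul_right ha hS_coprime.coprime_mul_left
  exact ⟨p, hp, hkp, hpa, fun q hq hqk hqmb ↦
    hpb.of_dvd (Finset.dvd_prod_of_mem _ (mem_S.mpr ⟨hqk, hq, hqmb⟩))⟩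

theorem dvd_three_of_modEq_two_of_dvd_sq_sub_one {p q : ℕ} (hp : p ≠ 0) (h : p ≡ 2 [MOD q])
    (hq : q ∣ p ^ 2 - 1) : q ∣ 3 := by
  have one_modEq_sq : 1 ≡ p ^ 2 [MOD q] :=
    (Nat.modEq_iff_dvd' (Nat.one_le_pow _ _ hp.pos)).mpr hq
  exact (Nat.modEq_iff_dvd' (by norm_num)).mp (one_modEq_sq.trans (h.pow 2))

theorem twentyFour_dvd_sq_sub_one_of_coprime {p : ℕ} (hp : p.Coprime 24) : 24 ∣ p ^ 2 - 1 := by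
  have units_sq_eq_one : ∀ u : (ZMod 24)ˣ, (u : ZMod 24) ^ 2 = 1 := by decide
  have hp_sq : 1 ≡ p ^ 2 [MOD 24] := by
    rw [← ZMod.natCast_eq_natCast_iff]
    push_cast
    exact (units_sq_eq_one (ZMod.unitOfCoprime p hp)).symm
  have hp_pos : 0 < p := Nat.pos_of_ne_zero (by rintro rfl; norm_num at hp)
  exact (Nat.modEq_iff_dvd' (Nat.one_le_pow _ _ hp_pos)).mp hp_sq

theorem sq_sub_one_div_twentyFour_modEq_five {p : ℕ} (h : p ≡ 43 [MOD 72]) :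
    (p ^ 2 - 1) / 24 ≡ 5 [MOD 6] := by
  have h_mod : p % 72 = 43 := h
  obtain ⟨s, rfl⟩ : ∃ s, p = 72 * s + 43 := ⟨p / 72, by omega⟩
  have sq_eq : (72 * s + 43) ^ 2 = 24 * (6 * (36 * s ^ 2 + 43 * s + 12) + 5) + 1 := by ring
  rw [sq_eq, Nat.add_sub_cancel, Nat.mul_div_cancel_left _ (by norm_num), Nat.ModEq,
    Nat.mul_add_mod]

theorem stmt_12 (k : ℕ) :
    ∃ p : ℕ, p.Prime ∧ p > k ∧ p % 24 = 19 ∧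
      ∀ q : ℕ, q.Prime → q ≤ k → ¬ q ∣ (p ^ 2 - 1) / 24 := by
  obtain ⟨p, hp, hkp, hp43, hp2⟩ :=
    exists_prime_gt_and_modEq_and_forall_prime_le_modEq k 2 (m := 72) (a := 43)
      (by norm_num) (by norm_num)
  have hp19 : p ≡ 19 [MOD 24] := (hp43.of_dvd (by norm_num : 24 ∣ 72)).trans (by decide)
  have hp24 : p.Coprime 24 := hp19.gcd_eq.trans (by norm_num)
  refine ⟨p, hp, hkp, hp19, fun q hq hqk hq_dvd ↦ ?_⟩
  have hq_not_dvd_six : ¬ q ∣ 6 := fun hq6 ↦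
    have hq5 : q ∣ 5 :=
      ((sq_sub_one_div_twentyFour_modEq_five hp43).dvd_iff hq6).mp hq_dvd
    hq.not_dvd_one (Nat.dvd_gcd hq5 hq6)
  have hp2q : p ≡ 2 [MOD q] := hp2 q hq hqk fun hq144 ↦
    hq_not_dvd_six (hq.dvd_of_dvd_pow (hq144.trans (by norm_num : 72 * 2 ∣ 6 ^ 4)))
  have hq_dvd_sq_sub_one : q ∣ p ^ 2 - 1 :=
    hq_dvd.trans (Nat.div_dvd_of_dvd (twentyFour_dvd_sq_sub_one_of_coprime hp24))
  have hq3 : q ∣ 3 := dvd_three_of_modEq_two_of_dvd_sq_sub_one hp.ne_zero hp2q hq_dvd_sq_sub_one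
  exact hq_not_dvd_six (hq3.trans (by norm_num))
end

section
/- The Hénon map g(x,y) = (y, (y²−2)(y²−3)(y²−6) + x) on ℚ² has no periodic points: for every (x,y) ∈ ℚ² and every integer n ≥ 1, gⁿ(x,y) ≠ (x,y). -/
/-- The Hénon map `g(x,y) = (y, (y²−2)(y²−3)(y²−6) + x)`. -/
def henonMap {R : Type*} [CommRing R] (P : R × R) : R × R :=
  (P.2, (P.2 ^ 2 - 2) * (P.2 ^ 2 - 3) * (P.2 ^ 2 - 6) + P.1)

/-!
Along an orbit the first coordinates satisfy `a (k + 2) - a k = F (a (k + 1))`, where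
`F = (X² - 2)(X² - 3)(X² - 6)`. If the orbit is periodic, then for each valuation or absolute value
some `t = a (m + 1)` is largest, and `F t` is a difference of two terms that are no larger than `t`.
Since `F` is monic over `ℤ` of degree at least two, `v (F t) > v t` for every valuation `v` of `ℚ`
with `v t > 1`, so all `a k` are integers. Since `|F t| > 2 |t|` for `|t| ≥ 3`, they all lie among
`0`, `±1`, `±2`. But `F` is negative there, so `a (k + 2) < a k` for all `k`, contradicting
periodicity.
-/

open Polynomial

theorem exists_forall_le_succ_of_periodic {α : Type*} [LinearOrder α] {b : ℕ → α} {n : ℕ}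
    (hn : 0 < n) (hb : Function.Periodic b n) : ∃ m, ∀ k, b k ≤ b (m + 1) := by
  obtain ⟨m, -, hm⟩ := Finset.exists_max_image (Finset.range n) b ⟨0, Finset.mem_range.2 hn⟩
  have shift : b (m + n - 1 + 1) = b m := by rw [Nat.sub_add_cancel (by lia), hb m]
  refine ⟨m + n - 1, fun k ↦ ?_⟩
  rw [shift, ← hb.map_mod_nat k]
  exact hm _ (Finset.mem_range.2 (Nat.mod_lt k hn))

theorem valuation_aeval_eq_pow_natDegree {R A Γ₀ : Type*} [CommRing R] [CommRing A] [Algebra R A]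
    [LinearOrderedCommGroupWithZero Γ₀] {v : Valuation A Γ₀}
    (hv : ∀ r : R, v (algebraMap R A r) ≤ 1) {F : R[X]} (hF : F.Monic) {x : A} (hx : 1 < v x) :
    v (aeval x F) = v x ^ F.natDegree := by
  have lower_terms : v (∑ i ∈ Finset.range F.natDegree, algebraMap R A (F.coeff i) * x ^ i)
      < v (x ^ F.natDegree) := by
    rw [map_pow]
    refine v.map_sum_lt' (pow_pos (zero_lt_one.trans hx) _) fun i hi ↦ ?_
    rw [map_mul, map_pow]
    exact mul_lt_of_le_one_of_lt (hv _) (pow_lt_pow_right₀ hx (Finset.mem_range.1 hi))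
  rw [aeval_eq_sum_range, Finset.sum_range_succ, hF.coeff_natDegree, one_smul]
  simp only [Algebra.smul_def]
  rw [v.map_add_eq_of_lt_right lower_terms, map_pow]

theorem isIntegral_of_forall_mem_valuationSubring {R K : Type*} [CommRing R] [Field K]
    [Algebra R K] {x : K}
    (h : ∀ V : ValuationSubring K, (∀ r : R, algebraMap R K r ∈ V) → x ∈ V) : IsIntegral R x := by
  by_contra hx
  let S := (integralClosure R K).toSubring
  have : IsIntegrallyClosedIn S K := inferInstanceAs (IsIntegrallyClosedIn (integralClosure R K) K)
  obtain ⟨V, hSV, hxV⟩ := S.exists_le_valuationSubring_of_isIntegrallyClosedIn hx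
  exact hxV (h V fun r ↦ hSV (isIntegral_algebraMap (R := R)))

/-- `a` is the sequence of first coordinates along a forward orbit of the generalized Hénon map
`(x, y) ↦ (y, f y + x)`; the second coordinates are then `a 1, a 2, …`. -/
def IsHenonOrbit {A : Type*} [Add A] (f : A → A) (a : ℕ → A) : Prop :=
  ∀ k, a (k + 2) = f (a (k + 1)) + a k

namespace IsHenonOrbit

variable {A : Type*} {f : A → A} {a : ℕ → A} {n : ℕ}

theorem apply_eq_sub [AddGroup A] (h : IsHenonOrbit f a) (k : ℕ) :
    f (a (k + 1)) = a (k + 2) - a k :=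
  eq_sub_of_add_eq (h k).symm

theorem valuation_le_of_periodic [Ring A] {Γ₀ : Type*} [LinearOrderedCommMonoidWithZero Γ₀]
    {v : Valuation A Γ₀} {B : Γ₀} (hf : ∀ x, B < v x → v x < v (f x)) (h : IsHenonOrbit f a)
    (hn : 0 < n) (ha : Function.Periodic a n) (k : ℕ) : v (a k) ≤ B := by
  obtain ⟨m, hm⟩ := exists_forall_le_succ_of_periodic hn (ha.comp v)
  by_contra! hk
  refine (hf (a (m + 1)) (hk.trans_le (hm k))).not_ge ?_
  rw [h.apply_eq_sub]
  exact v.map_sub_le (hm (m + 2)) (hm m)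

theorem abs_lt_of_periodic [Ring A] [LinearOrder A] [IsOrderedRing A] {B : A}
    (hf : ∀ x, B ≤ |x| → 2 * |x| < |f x|) (h : IsHenonOrbit f a)
    (hn : 0 < n) (ha : Function.Periodic a n) (k : ℕ) : |a k| < B := by
  obtain ⟨m, hm⟩ := exists_forall_le_succ_of_periodic hn (ha.comp abs)
  by_contra! hk
  refine (hf (a (m + 1)) (hk.trans (hm k))).not_ge ?_
  calc |f (a (m + 1))| = |a (m + 2) - a m| := by rw [h.apply_eq_sub]
    _ ≤ |a (m + 2)| + |a m| := abs_sub _ _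
    _ ≤ 2 * |a (m + 1)| := by rw [two_mul]; exact add_le_add (hm (m + 2)) (hm m)

theorem not_periodic_of_neg [AddCommGroup A] [LinearOrder A] [IsOrderedAddMonoid A]
    (hf : ∀ k, f (a k) < 0) (h : IsHenonOrbit f a) (hn : 0 < n) : ¬ Function.Periodic a n := by
  intro ha
  obtain ⟨m, hm⟩ := exists_forall_le_succ_of_periodic hn (ha.comp Neg.neg)
  have le_later : a (m + 1) ≤ a (m + 3) := neg_le_neg_iff.1 (hm (m + 3))
  have later_lt : a (m + 3) < a (m + 1) := (h (m + 1)).trans_lt (add_lt_of_neg_left _ (hf (m + 2)))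
  exact later_lt.not_ge le_later

theorem isIntegral_of_periodic {R K : Type*} [CommRing R] [Field K] [Algebra R K] {F : R[X]}
    (hF : F.Monic) (hdeg : 2 ≤ F.natDegree) {a : ℕ → K} (h : IsHenonOrbit (fun x ↦ aeval x F) a)
    (hn : 0 < n) (ha : Function.Periodic a n) (k : ℕ) : IsIntegral R (a k) := by
  refine isIntegral_of_forall_mem_valuationSubring fun V hV ↦ ?_
  have expanding (x : K) (hx : 1 < V.valuation x) :
      V.valuation x < V.valuation (aeval x F) := by
    rw [valuation_aeval_eq_pow_natDegree (fun r ↦ (V.valuation_le_one_iff _).2 (hV r)) hF hx]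
    exact lt_self_pow₀ hx hdeg
  exact (V.valuation_le_one_iff _).1 (h.valuation_le_of_periodic expanding hn ha k)

end IsHenonOrbit

/-- The polynomial `(X² - 2)(X² - 3)(X² - 6)` in the second component of `henonMap`, over `ℤ` so
that it can be evaluated in every ring. -/
noncomputable def henonPolynomial : ℤ[X] := (X ^ 2 - 2) * (X ^ 2 - 3) * (X ^ 2 - 6)

theorem aeval_henonPolynomial {A : Type*} [CommRing A] (x : A) :
    aeval x henonPolynomial = (x ^ 2 - 2) * (x ^ 2 - 3) * (x ^ 2 - 6) := by
  simp only [henonPolynomial, map_mul, map_sub, map_pow, aeval_X, map_ofNat]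

theorem natDegree_henonPolynomial : henonPolynomial.natDegree = 6 := by
  unfold henonPolynomial
  compute_degree!

theorem monic_henonPolynomial : henonPolynomial.Monic := by
  unfold henonPolynomial
  monicity!

theorem two_mul_abs_lt_abs_aeval_henonPolynomial {A : Type*} [CommRing A] [LinearOrder A]
    [IsStrictOrderedRing A] {x : A} (hx : 3 ≤ |x|) : 2 * |x| < |aeval x henonPolynomial| := by
  have three_mul_le : 3 * |x| ≤ x ^ 2 := by
    rw [← sq_abs, sq]
    exact mul_le_mul_of_nonneg_right hx (abs_nonneg x)
  calc 2 * |x| < x ^ 2 - 2 := by linarith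
    _ ≤ (x ^ 2 - 2) * (x ^ 2 - 3) := le_mul_of_one_le_right (by linarith) (by linarith)
    _ ≤ (x ^ 2 - 2) * (x ^ 2 - 3) * (x ^ 2 - 6) :=
      le_mul_of_one_le_right (mul_nonneg (by linarith) (by linarith)) (by linarith)
    _ = aeval x henonPolynomial := (aeval_henonPolynomial x).symm
    _ ≤ |aeval x henonPolynomial| := le_abs_self _

theorem aeval_henonPolynomial_neg {z : ℤ} (hz : |z| < 3) : aeval z henonPolynomial < 0 := by
  obtain ⟨lower, upper⟩ := abs_lt.1 hz
  rw [aeval_henonPolynomial]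
  interval_cases z <;> norm_num

theorem aeval_henonPolynomial_neg_of_isIntegral {q : ℚ} (hq : IsIntegral ℤ q) (hlt : |q| < 3) :
    aeval q henonPolynomial < 0 := by
  obtain ⟨z, rfl⟩ := IsIntegrallyClosed.isIntegral_iff.1 hq
  rw [aeval_algebraMap_apply]
  rw [eq_intCast] at hlt ⊢
  exact_mod_cast aeval_henonPolynomial_neg (z := z) (by exact_mod_cast hlt)

theorem isHenonOrbit_iterate_henonMap {A : Type*} [CommRing A] (P : A × A) :
    IsHenonOrbit (fun x ↦ aeval x henonPolynomial) (fun k ↦ (henonMap^[k] P).1) := by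
  intro k
  simp only [Function.iterate_succ_apply', aeval_henonPolynomial, henonMap]

theorem stmt_16 (x y : ℚ) (n : ℕ) (hn : 1 ≤ n) :
    henonMap^[n] (x, y) ≠ (x, y) := by
  intro hfix
  have orbit := isHenonOrbit_iterate_henonMap (x, y)
  have periodic : Function.Periodic (fun k ↦ (henonMap^[k] (x, y)).1) n := fun k ↦ by
    simp only [Function.iterate_add_apply, hfix]
  have integral := orbit.isIntegral_of_periodic monic_henonPolynomial
    (by rw [natDegree_henonPolynomial]; norm_num) hn periodic
  have bounded := orbit.abs_lt_of_periodic
    (fun _ ↦ two_mul_abs_lt_abs_aeval_henonPolynomial) hn periodic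
  exact orbit.not_periodic_of_neg
    (fun k ↦ aeval_henonPolynomial_neg_of_isIntegral (integral k) (bounded k)) hn periodic
end

section
/- There exists N such that for every prime p > N for which 2 is a square modulo p, there exists (x,y,z) ∈ 𝔽_p³ with x² + y² + z² = xyz, z² = 2, (x,y) ≠ (0,0), and (x,y,z) is a periodic point of f of exact period 4 (i.e., f⁴(x,y,z) = (x,y,z) and fᵐ(x,y,z) ≠ (x,y,z) for m = 1, 2, 3). -/
/-!
On a fibre `z² = 2` the map `f` is linear in `(x, y)` with trace `z² - 2 = 0` and determinant `1`,
so by Cayley–Hamilton its square is `-1`. Away from characteristic `2`, every point of such a fibre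
with `(x, y) ≠ (0, 0)` therefore has exact period `4`. The fibre of the Markoff surface itself is
the conic `x² - zxy + y² = -2`; completing the square gives `u² + v² = -2` with `x = u + v`,
`y = vz`, and in a domain of positive characteristic every integer is a sum of two squares.
-/

section MarkoffMap

variable {R : Type*} [CommRing R] {x y z : R}

theorem markoffMap_iterate_two_of_sq_eq_two (hz : z ^ 2 = 2) (x y : R) :
    markoffMap^[2] (x, y, z) = (-x, -y, z) := by
  simp only [Function.iterate_succ_apply, Function.iterate_zero_apply, markoffMap, Prod.mk.injEq,
    and_true]
  constructor
  · linear_combination (x * (z ^ 2 - 1) - z * y) * hz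
  · linear_combination (x * z - y) * hz

theorem isPeriodicPt_markoffMap_four_of_sq_eq_two (hz : z ^ 2 = 2) (x y : R) :
    Function.IsPeriodicPt markoffMap 4 (x, y, z) := by
  change markoffMap^[2 + 2] (x, y, z) = (x, y, z)
  simp only [Function.iterate_add_apply, markoffMap_iterate_two_of_sq_eq_two hz, neg_neg]

theorem not_isPeriodicPt_markoffMap_two_of_sq_eq_two [IsDomain R] (hR : ringChar R ≠ 2)
    (hz : z ^ 2 = 2) (hxy : (x, y) ≠ (0, 0)) :
    ¬ Function.IsPeriodicPt markoffMap 2 (x, y, z) := by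
  intro hper
  have hneg : (-x, -y, z) = (x, y, z) :=
    (markoffMap_iterate_two_of_sq_eq_two hz x y).symm.trans hper
  simp only [Prod.mk.injEq, and_true, Ring.eq_self_iff_eq_zero_of_char_ne_two hR] at hneg
  exact hxy (Prod.ext hneg.1 hneg.2)

theorem minimalPeriod_markoffMap_eq_four [IsDomain R] (hR : ringChar R ≠ 2) (hz : z ^ 2 = 2)
    (hxy : (x, y) ≠ (0, 0)) : Function.minimalPeriod markoffMap (x, y, z) = 4 :=
  Function.minimalPeriod_eq_prime_pow (p := 2) (k := 1)
    (not_isPeriodicPt_markoffMap_two_of_sq_eq_two hR hz hxy)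
    (isPeriodicPt_markoffMap_four_of_sq_eq_two hz x y)

end MarkoffMap

section MarkoffSurface

variable {R : Type*} [CommRing R]

theorem markoff_equation_of_sq_add_sq_eq_neg_two {u v z : R} (hz : z ^ 2 = 2)
    (huv : u ^ 2 + v ^ 2 = -2) :
    (u + v) ^ 2 + (v * z) ^ 2 + z ^ 2 = (u + v) * (v * z) * z := by
  linear_combination huv + (1 - u * v) * hz

theorem prodMk_ne_zero_of_markoff_equation {x y z : R} (hM : x ^ 2 + y ^ 2 + z ^ 2 = x * y * z)
    (hz : z ^ 2 ≠ 0) : (x, y) ≠ (0, 0) := by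
  rintro ⟨⟩
  exact hz (by linear_combination hM)

theorem exists_markoff_equation_of_sq_eq_two [IsDomain R] (hR : ringChar R ≠ 0) {z : R}
    (hz : z ^ 2 = 2) : ∃ x y : R, x ^ 2 + y ^ 2 + z ^ 2 = x * y * z := by
  have : NeZero (ringChar R) := ⟨hR⟩
  obtain ⟨u, v, huv⟩ := CharP.sq_add_sq R (ringChar R) (-2)
  exact ⟨u + v, v * z, markoff_equation_of_sq_add_sq_eq_neg_two hz (mod_cast huv)⟩

end MarkoffSurface

theorem stmt_17_general {R : Type*} [CommRing R] [IsDomain R] (hR₀ : ringChar R ≠ 0)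
    (hR₂ : ringChar R ≠ 2) (h2 : IsSquare (2 : R)) :
    ∃ x y z : R,
      x ^ 2 + y ^ 2 + z ^ 2 = x * y * z ∧
      z ^ 2 = 2 ∧
      (x, y) ≠ (0, 0) ∧
      markoffMap^[4] (x, y, z) = (x, y, z) ∧
      ∀ m : ℕ, 1 ≤ m → m < 4 → markoffMap^[m] (x, y, z) ≠ (x, y, z) := by
  obtain ⟨z, hz⟩ : ∃ z : R, z ^ 2 = 2 := by simpa only [eq_comm] using h2.exists_sq
  obtain ⟨x, y, hM⟩ := exists_markoff_equation_of_sq_eq_two hR₀ hz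
  have hxy : (x, y) ≠ (0, 0) :=
    prodMk_ne_zero_of_markoff_equation hM (hz ▸ Ring.two_ne_zero hR₂)
  refine ⟨x, y, z, hM, hz, hxy, isPeriodicPt_markoffMap_four_of_sq_eq_two hz x y, ?_⟩
  intro m hm hm4
  exact Function.not_isPeriodicPt_of_pos_of_lt_minimalPeriod (Nat.one_le_iff_ne_zero.mp hm)
    (hm4.trans_eq (minimalPeriod_markoffMap_eq_four hR₂ hz hxy).symm)

theorem stmt_17 :
    ∃ N : ℕ, ∀ p : ℕ, p.Prime → p > N → IsSquare (2 : ZMod p) →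
      ∃ x y z : ZMod p,
        x ^ 2 + y ^ 2 + z ^ 2 = x * y * z ∧
        z ^ 2 = 2 ∧
        (x, y) ≠ (0, 0) ∧
        markoffMap^[4] (x, y, z) = (x, y, z) ∧
        ∀ m : ℕ, 1 ≤ m → m < 4 → markoffMap^[m] (x, y, z) ≠ (x, y, z) := by
  refine ⟨2, fun p hp hp2 h2 ↦ ?_⟩
  have : Fact p.Prime := ⟨hp⟩
  exact stmt_17_general ((ZMod.ringChar_zmod_n p).trans_ne hp.ne_zero)
    ((ZMod.ringChar_zmod_n p).trans_ne hp2.ne') h2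
end

section
/- There exists N such that for every prime p > N for which 3 is a square modulo p, there exists (x,y,z) ∈ 𝔽_p³ with x² + y² + z² = xyz, z² = 3, (x,y) ≠ (0,0), and (x,y,z) is a periodic point of f of exact period 6 (i.e., f⁶(x,y,z) = (x,y,z) and fᵐ(x,y,z) ≠ (x,y,z) for 1 ≤ m ≤ 5). -/
/-!
On the fibre over a fixed `z` the map `f` is linear in `(x, y)`, with determinant `1` and trace
`z² - 2`. When `z² = 3` its characteristic polynomial is `T² - T + 1`, the sixth cyclotomic
polynomial, so `f³ = -1` on the fibre; in a domain of characteristic different from `2` and `3`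
every nonzero vector therefore has exact period `6`. A point of the Markoff surface on this fibre
comes from completing the square: substituting `(x, y) = (a + zb, 2b)` turns the Markoff equation
into `a² + b² = -3`, which is solvable in positive characteristic.
-/

open Function

theorem minimalPeriod_eq_of_forall_prime_not_isPeriodicPt_div {α : Type*} {f : α → α} {x : α}
    {n : ℕ} (hx : IsPeriodicPt f n x)
    (hdiv : ∀ q : ℕ, q.Prime → q ∣ n → ¬IsPeriodicPt f (n / q) x) : minimalPeriod f x = n := by
  obtain ⟨k, hk⟩ := hx.minimalPeriod_dvd
  suffices k = 1 by rw [hk, this, mul_one]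
  by_contra hk_ne_one
  obtain ⟨q, hq, r, rfl⟩ := Nat.exists_prime_and_dvd hk_ne_one
  have hn_eq : n = q * (minimalPeriod f x * r) := by rw [hk]; ring
  apply hdiv q hq ⟨_, hn_eq⟩
  rw [Nat.div_eq_of_eq_mul_right hq.pos hn_eq]
  exact (isPeriodicPt_minimalPeriod f x).mul_const r

section CommRing

variable {R : Type*} [CommRing R] {z : R}

theorem markoff_eq_of_sq_add_mul_sq_eq {a b : R} (h : a ^ 2 + (4 - z ^ 2) * b ^ 2 = -z ^ 2) :
    (a + z * b) ^ 2 + (2 * b) ^ 2 + z ^ 2 = (a + z * b) * (2 * b) * z := by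
  linear_combination h

theorem markoffMap_iterate_two_of_sq_eq_three (hz : z ^ 2 = 3) (x y : R) :
    markoffMap^[2] (x, y, z) = (x - z * y, z * x - 2 * y, z) := by
  simp only [iterate_succ_apply, iterate_zero_apply, markoffMap, Prod.mk.injEq, and_true]
  constructor
  · linear_combination (z ^ 2 * x - z * y) * hz
  · linear_combination (z * x - y) * hz

theorem markoffMap_iterate_three_of_sq_eq_three (hz : z ^ 2 = 3) (x y : R) :
    markoffMap^[3] (x, y, z) = (-x, -y, z) := by
  rw [iterate_succ_apply', markoffMap_iterate_two_of_sq_eq_three hz]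
  simp only [markoffMap, Prod.mk.injEq, and_true]
  constructor
  · linear_combination (-z * y) * hz
  · linear_combination -y * hz

theorem isPeriodicPt_markoffMap_six_of_sq_eq_three (hz : z ^ 2 = 3) (x y : R) :
    IsPeriodicPt markoffMap 6 (x, y, z) := by
  change markoffMap^[3 + 3] (x, y, z) = (x, y, z)
  simp only [iterate_add_apply, markoffMap_iterate_three_of_sq_eq_three hz, neg_neg]

variable [NoZeroDivisors R] {x y : R}

theorem not_isPeriodicPt_markoffMap_two_of_sq_eq_three (h3 : (3 : R) ≠ 0) (hz : z ^ 2 = 3)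
    (hxy : (x, y) ≠ (0, 0)) : ¬IsPeriodicPt markoffMap 2 (x, y, z) := by
  intro h
  have hz_ne_zero : z ≠ 0 := by
    rintro rfl
    exact h3 (by linear_combination -hz)
  rw [IsPeriodicPt, IsFixedPt, markoffMap_iterate_two_of_sq_eq_three hz] at h
  simp only [Prod.mk.injEq, and_true] at h
  obtain ⟨h_fst, h_snd⟩ := h
  have hy : y = 0 := by
    apply (mul_eq_zero.mp _).resolve_left hz_ne_zero
    linear_combination -h_fst
  have hx : x = 0 := by
    apply (mul_eq_zero.mp _).resolve_left hz_ne_zero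
    linear_combination h_snd + 3 * hy
  exact hxy (by rw [hx, hy])

theorem not_isPeriodicPt_markoffMap_three_of_sq_eq_three (h2 : (2 : R) ≠ 0) (hz : z ^ 2 = 3)
    (hxy : (x, y) ≠ (0, 0)) : ¬IsPeriodicPt markoffMap 3 (x, y, z) := by
  intro h
  rw [IsPeriodicPt, IsFixedPt, markoffMap_iterate_three_of_sq_eq_three hz] at h
  simp only [Prod.mk.injEq, and_true] at h
  obtain ⟨h_fst, h_snd⟩ := h
  have eq_zero_of_neg_eq_self {t : R} (ht : -t = t) : t = 0 := by
    apply (mul_eq_zero.mp _).resolve_left h2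
    linear_combination -ht
  exact hxy (by rw [eq_zero_of_neg_eq_self h_fst, eq_zero_of_neg_eq_self h_snd])

theorem minimalPeriod_markoffMap_of_sq_eq_three (h2 : (2 : R) ≠ 0) (h3 : (3 : R) ≠ 0)
    (hz : z ^ 2 = 3) (hxy : (x, y) ≠ (0, 0)) : minimalPeriod markoffMap (x, y, z) = 6 := by
  refine minimalPeriod_eq_of_forall_prime_not_isPeriodicPt_div
    (isPeriodicPt_markoffMap_six_of_sq_eq_three hz x y) fun q hq hq6 ↦ ?_
  obtain hq2 | hq3 : q ∣ 2 ∨ q ∣ 3 := hq.dvd_mul.mp hq6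
  · obtain rfl := (Nat.prime_dvd_prime_iff_eq hq Nat.prime_two).mp hq2
    exact not_isPeriodicPt_markoffMap_three_of_sq_eq_three h2 hz hxy
  · obtain rfl := (Nat.prime_dvd_prime_iff_eq hq Nat.prime_three).mp hq3
    exact not_isPeriodicPt_markoffMap_two_of_sq_eq_three h3 hz hxy

end CommRing

theorem exists_markoff_eq_of_sq_eq_three {R : Type*} [CommRing R] [IsDomain R] (p : ℕ) [NeZero p]
    [CharP R p] {z : R} (hz : z ^ 2 = 3) : ∃ x y : R, x ^ 2 + y ^ 2 + z ^ 2 = x * y * z := by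
  obtain ⟨a, b, hab⟩ := CharP.sq_add_sq R p (-3)
  push_cast at hab
  exact ⟨_, _, markoff_eq_of_sq_add_mul_sq_eq (a := (a : R)) (b := b)
    (by linear_combination hab + (1 - (b : R) ^ 2) * hz)⟩

theorem stmt_18_general {R : Type*} [CommRing R] [IsDomain R] (p : ℕ) [CharP R p] (hp : 3 < p)
    (hsq : IsSquare (3 : R)) :
    ∃ x y z : R,
      x ^ 2 + y ^ 2 + z ^ 2 = x * y * z ∧
      z ^ 2 = 3 ∧
      (x, y) ≠ (0, 0) ∧
      markoffMap^[6] (x, y, z) = (x, y, z) ∧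
      ∀ m : ℕ, 1 ≤ m → m < 6 → markoffMap^[m] (x, y, z) ≠ (x, y, z) := by
  have : NeZero p := ⟨by omega⟩
  have hp2 : p ≠ 2 := by omega
  have h2 : (2 : R) ≠ 0 := mod_cast CharP.cast_ne_zero_of_ne_of_prime R Nat.prime_two hp2
  have h3 : (3 : R) ≠ 0 := mod_cast CharP.cast_ne_zero_of_ne_of_prime R Nat.prime_three hp.ne'
  obtain ⟨z, hz⟩ : ∃ z : R, z ^ 2 = 3 := hsq.exists_sq.imp fun _ ↦ Eq.symm
  obtain ⟨x, y, hM⟩ := exists_markoff_eq_of_sq_eq_three p hz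
  have hxy : (x, y) ≠ (0, 0) := by
    rintro ⟨⟩
    exact h3 (by linear_combination hM - hz)
  have hperiod := minimalPeriod_markoffMap_of_sq_eq_three h2 h3 hz hxy
  exact ⟨x, y, z, hM, hz, hxy, isPeriodicPt_markoffMap_six_of_sq_eq_three hz x y, fun m hm hm6 ↦
    not_isPeriodicPt_of_pos_of_lt_minimalPeriod (by omega) (hperiod ▸ hm6)⟩

theorem stmt_18 :
    ∃ N : ℕ, ∀ p : ℕ, p.Prime → p > N → IsSquare (3 : ZMod p) →
      ∃ x y z : ZMod p,
        x ^ 2 + y ^ 2 + z ^ 2 = x * y * z ∧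
        z ^ 2 = 3 ∧
        (x, y) ≠ (0, 0) ∧
        markoffMap^[6] (x, y, z) = (x, y, z) ∧
        ∀ m : ℕ, 1 ≤ m → m < 6 → markoffMap^[m] (x, y, z) ≠ (x, y, z) := by
  refine ⟨3, fun p hp hp3 hsq ↦ ?_⟩
  have : Fact p.Prime := ⟨hp⟩
  exact stmt_18_general p hp3 hsq
end
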